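/- Let X be a Tychonoff separably λ-submetrizable space and λ ∈ Ψ. Then C_λ(X) is H-separable if and only if for each sequence (𝒰_n : n ∈ ℕ) of λ-f-covers of X there is a sequence (𝒱_n : n ∈ ℕ) of finite sets such that 𝒱_n ⊆ 𝒰_n for each n, and each F ∈ λ is contained in an element of 𝒱_n for all but finitely many n ∈ ℕ. -/

import Mathlib

open Set Filter Topology TopologicalSpace ContinuousMap

/-- A subset `A` of `X` is *C-compact* if `f '' A` is compact in `ℝ` for every
continuous real-valued function `f` on `X`. -/
def IsCCompact {X : Type*} [TopologicalSpace X] (A : Set X) : Prop :=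
  ∀ f : C(X, ℝ), IsCompact (f '' A)

/-- The `λ`-open (set-open) topology on `C(X, ℝ)`, generated by the subbasic sets
`[F, U] = {f : f '' F ⊆ U}` for `F ∈ lam` and `U ⊆ ℝ` open. -/
def setOpenTopology {X : Type*} [TopologicalSpace X] (lam : Set (Set X)) :
    TopologicalSpace C(X, ℝ) :=
  TopologicalSpace.generateFrom
    {S | ∃ F ∈ lam, ∃ U : Set ℝ, IsOpen U ∧ S = {f : C(X, ℝ) | f '' F ⊆ U}}

/-- Membership in the collection `Ψ`: a family of nonempty closed C-compact subsets of `X`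
forming a π-network, hereditary with respect to (closed) C-compact subsets of its elements,
and maximal among families of nonempty sets inducing the same set-open topology. -/
structure MemPsi {X : Type*} [TopologicalSpace X] (lam : Set (Set X)) : Prop where
  nonempty : ∀ A ∈ lam, A.Nonempty
  closed : ∀ A ∈ lam, IsClosed A
  ccompact : ∀ A ∈ lam, IsCCompact A
  piNetwork : ∀ U : Set X, IsOpen U → U.Nonempty → ∃ A ∈ lam, A ⊆ U
  hereditary : ∀ A ∈ lam, ∀ B : Set X, B ⊆ A → B.Nonempty → IsClosed B → IsCCompact B →
    B ∈ lam
  maximal : ∀ lam' : Set (Set X), (∀ A ∈ lam', A.Nonempty) →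
    setOpenTopology lam' = setOpenTopology lam → lam' ⊆ lam

/-- A cozero (functional open) subset of `X`: the complement of a zero-set. -/
def IsCozero {X : Type*} [TopologicalSpace X] (U : Set X) : Prop :=
  ∃ f : C(X, ℝ), U = {x | f x ≠ 0}

/-- `𝒰` is a `λ`-f-cover: a family of cozero sets, not containing `X`, such that every
member of `lam` is contained in some member of `𝒰`. -/
def IsFCover {X : Type*} [TopologicalSpace X] (lam : Set (Set X)) (𝒰 : Set (Set X)) : Prop :=
  (Set.univ : Set X) ∉ 𝒰 ∧ (∀ U ∈ 𝒰, IsCozero U) ∧ ∀ A ∈ lam, ∃ U ∈ 𝒰, A ⊆ U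

/-- `Λ(λ)`: the collection of all `λ`-f-covers of `X`. -/
def fCovers {X : Type*} [TopologicalSpace X] (lam : Set (Set X)) : Set (Set (Set X)) :=
  {𝒰 | IsFCover lam 𝒰}

/-- The selection principle `S₁(𝒜, ℬ)`. -/
def S1 {α : Type*} (𝒜 ℬ : Set (Set α)) : Prop :=
  ∀ A : ℕ → Set α, (∀ n, A n ∈ 𝒜) →
    ∃ b : ℕ → α, (∀ n, b n ∈ A n) ∧ Set.range b ∈ ℬ

/-- The selection principle `S_fin(𝒜, ℬ)`. -/
def Sfin {α : Type*} (𝒜 ℬ : Set (Set α)) : Prop :=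
  ∀ A : ℕ → Set α, (∀ n, A n ∈ 𝒜) →
    ∃ B : ℕ → Set α, (∀ n, (B n).Finite ∧ B n ⊆ A n) ∧ (⋃ n, B n) ∈ ℬ

/-- `Ω_y` with respect to the topology `t`: sets having `y` in their closure but not
containing `y`. -/
def OmegaPt {Y : Type*} (t : TopologicalSpace Y) (y : Y) : Set (Set Y) :=
  {A | y ∈ @closure Y t A ∧ y ∉ A}

/-- Countable `(t₁, t₂)`-tightness of a bitopological space. -/
def CountableBiTightness {Y : Type*} (t1 t2 : TopologicalSpace Y) : Prop :=
  ∀ A : Set Y, ∀ f ∈ @closure Y t1 A, ∃ B ⊆ A, B.Countable ∧ f ∈ @closure Y t2 B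

/-- `X` is `λ`-`μ`-Lindelöf: every `λ`-f-cover has a countable subfamily which is a
`μ`-f-cover. -/
def LamMuLindelof {X : Type*} [TopologicalSpace X] (lam mu : Set (Set X)) : Prop :=
  ∀ 𝒰 : Set (Set X), IsFCover lam 𝒰 → ∃ 𝒱 ⊆ 𝒰, 𝒱.Countable ∧ IsFCover mu 𝒱

/-- Countable `(t₁, t₂)`-T-tightness: for every uncountable regular cardinal `κ` and every
increasing `κ`-indexed sequence of `t₁`-closed sets, the union is `t₂`-closed. -/
def CountableBiTTightness {Y : Type*} (t1 t2 : TopologicalSpace Y) : Prop :=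
  ∀ κ : Cardinal.{0}, Cardinal.aleph0 < κ → κ.IsRegular →
    ∀ A : κ.ord.ToType → Set Y, Monotone A → (∀ α, @IsClosed Y t1 (A α)) →
      @IsClosed Y t2 (⋃ α, A α)

/-- `X` is separably `λ`-submetrizable: there is a continuous map of `X` onto a separable
metric space which is one-to-one on `⋃ lam`. -/
def SeparablyLamSubmetrizable (X : Type*) [TopologicalSpace X] (lam : Set (Set X)) : Prop :=
  ∃ (Y : Type) (m : MetricSpace Y),
    @SeparableSpace Y m.toPseudoMetricSpace.toUniformSpace.toTopologicalSpace ∧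
    ∃ f : X → Y,
      @Continuous X Y _ m.toPseudoMetricSpace.toUniformSpace.toTopologicalSpace f ∧
      Function.Surjective f ∧ Set.InjOn f (⋃₀ lam)

/-- `R`-separability for a pair of topologies: from every sequence of `t₁`-dense sets one
can pick single points forming a `t₂`-dense set. -/
def RSepBi {Y : Type*} (t1 t2 : TopologicalSpace Y) : Prop :=
  ∀ D : ℕ → Set Y, (∀ n, @Dense Y t1 (D n)) →
    ∃ d : ℕ → Y, (∀ n, d n ∈ D n) ∧ @Dense Y t2 (Set.range d)

/-- `M`-separability for a pair of topologies. -/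
def MSepBi {Y : Type*} (t1 t2 : TopologicalSpace Y) : Prop :=
  ∀ D : ℕ → Set Y, (∀ n, @Dense Y t1 (D n)) →
    ∃ F : ℕ → Set Y, (∀ n, (F n).Finite ∧ F n ⊆ D n) ∧ @Dense Y t2 (⋃ n, F n)

/-- `H`-separability for a pair of topologies. -/
def HSepBi {Y : Type*} (t1 t2 : TopologicalSpace Y) : Prop :=
  ∀ D : ℕ → Set Y, (∀ n, @Dense Y t1 (D n)) →
    ∃ F : ℕ → Set Y, (∀ n, (F n).Finite ∧ F n ⊆ D n) ∧
      ∀ G : Set Y, @IsOpen Y t2 G → G.Nonempty →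
        ∀ᶠ n in Filter.atTop, (G ∩ F n).Nonempty

/-- A countable set `D` is groupable with respect to the topology `t`. -/
def GroupableIn {Y : Type*} (t : TopologicalSpace Y) (D : Set Y) : Prop :=
  ∃ A : ℕ → Set Y, (∀ n, (A n).Finite) ∧ D = ⋃ n, A n ∧
    ∀ G : Set Y, @IsOpen Y t G → G.Nonempty →
      ∀ᶠ n in Filter.atTop, (G ∩ A n).Nonempty

/-- `GN`-separability for a pair of topologies. -/
def GNSepBi {Y : Type*} (t1 t2 : TopologicalSpace Y) : Prop :=
  ∀ D : ℕ → Set Y, (∀ n, @Dense Y t1 (D n)) →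
    ∃ d : ℕ → Y, (∀ n, d n ∈ D n) ∧ @Dense Y t2 (Set.range d) ∧
      GroupableIn t2 (Set.range d)

/-- The `(t₁, t₂)`-Pytkeev property for a bitopological space. -/
def PytkeevBi {Y : Type*} (t1 t2 : TopologicalSpace Y) : Prop :=
  ∀ A : Set Y, ∀ g ∈ @closure Y t1 A, g ∉ A →
    ∃ B : ℕ → Set Y, (∀ n, (B n).Infinite ∧ B n ⊆ A) ∧
      ∀ G ∈ @nhds Y t2 g, ∃ n, B n ⊆ G

/-- A groupable `μ`-f-cover. -/
def GroupableFCover {X : Type*} [TopologicalSpace X] (mu 𝒱 : Set (Set X)) : Prop :=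
  𝒱.Countable ∧ IsFCover mu 𝒱 ∧
    ∃ G : ℕ → Set (Set X), (∀ m, (G m).Finite) ∧
      (Pairwise fun m k => Disjoint (G m) (G k)) ∧ 𝒱 = ⋃ m, G m ∧
      ∀ F ∈ mu, ∀ᶠ m in Filter.atTop, ∃ U ∈ G m, F ⊆ U

section Helpers

lemma ccompact_isCompact {X K : Type*} [TopologicalSpace X] [T35Space X] [MetricSpace K]
    [CompactSpace K] (φ : C(X, K)) (A : Set X) (hA : IsCCompact A) (hinj : Set.InjOn φ A) :
    IsCompact A := by
  rw [isCompact_iff_ultrafilter_le_nhds]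
  intro 𝓕 h𝓕
  obtain ⟨p, -, hp⟩ := isCompact_univ.ultrafilter_le_nhds (𝓕.map φ) (by simp)
  have hp' : Tendsto φ 𝓕 (𝓝 p) := hp
  have key : ∀ f : C(X, ℝ), ∃ a ∈ A, φ a = p ∧ Tendsto f 𝓕 (𝓝 (f a)) := by
    intro f
    obtain ⟨r, -, hr⟩ := (hA f).ultrafilter_le_nhds (𝓕.map f) (by
      rw [le_principal_iff] at h𝓕 ⊢
      exact image_mem_map h𝓕)
    have hr' : Tendsto f 𝓕 (𝓝 r) := hr
    let g : C(X, ℝ) := ⟨fun x => dist (φ x) p + |f x - r|, by fun_prop⟩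
    have hg : Tendsto g 𝓕 (𝓝 0) := by
      have h1 : Tendsto (fun x => dist (φ x) p + |f x - r|) 𝓕 (𝓝 (dist p p + |r - r|)) :=
        (hp'.dist tendsto_const_nhds).add ((hr'.sub tendsto_const_nhds).abs)
      rw [dist_self, sub_self, abs_zero, add_zero] at h1
      exact h1
    have h0 : (0 : ℝ) ∈ g '' A := by
      refine (hA g).isClosed.mem_of_tendsto hg ?_
      rw [le_principal_iff] at h𝓕
      filter_upwards [h𝓕] with x hx using mem_image_of_mem _ hx
    obtain ⟨a, ha, hga⟩ := h0
    have hga' : dist (φ a) p + |f a - r| = 0 := hga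
    have h1 : dist (φ a) p = 0 := by
      linarith [dist_nonneg (x := φ a) (y := p), abs_nonneg (f a - r)]
    have h2 : |f a - r| = 0 := by linarith
    refine ⟨a, ha, dist_eq_zero.1 h1, ?_⟩
    have : f a = r := by linarith [abs_eq_zero.1 h2]
    rwa [this]
  obtain ⟨a, ha, hap, -⟩ := key 0
  refine ⟨a, ha, ?_⟩
  intro U hU
  obtain ⟨V, hVU, hV, haV⟩ := mem_nhds_iff.1 hU
  obtain ⟨f, hf, hfa, hf1⟩ := CompletelyRegularSpace.completely_regular a Vᶜ hV.isClosed_compl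
    (by simpa using haV)
  let f' : C(X, ℝ) := ⟨fun x => (f x : ℝ), by fun_prop⟩
  obtain ⟨b, hb, hbp, hbt⟩ := key f'
  have hab : b = a := hinj hb ha (hbp.trans hap.symm)
  subst hab
  have h0 : f' b = 0 := by simp [f', hfa]
  rw [h0] at hbt
  have := hbt.eventually (gt_mem_nhds (zero_lt_one))
  refine mem_of_superset this fun x hx => hVU ?_
  by_contra hxV
  have h1 : f x = 1 := hf1 hxV
  have : f' x = 1 := by simp [f', h1]
  have hx' : f' x < 1 := hx
  linarith

lemma lam_union {X : Type*} [TopologicalSpace X] {lam : Set (Set X)} (hlam : MemPsi lam)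
    {A B : Set X} (hA : A ∈ lam) (hB : B ∈ lam) : A ∪ B ∈ lam := by
  refine hlam.maximal (insert (A ∪ B) lam) ?_ ?_ (mem_insert _ _)
  · rintro C (rfl | hC)
    · exact (hlam.nonempty A hA).mono subset_union_left
    · exact hlam.nonempty C hC
  · apply le_antisymm
    · apply generateFrom_anti
      rintro S ⟨F, hF, U, hU, rfl⟩
      exact ⟨F, mem_insert_of_mem _ hF, U, hU, rfl⟩
    · apply le_generateFrom
      rintro S ⟨F, (rfl | hF), U, hU, rfl⟩
      · have h1 : IsOpen[setOpenTopology lam] {f : C(X, ℝ) | f '' A ⊆ U} :=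
          isOpen_generateFrom_of_mem ⟨A, hA, U, hU, rfl⟩
        have h2 : IsOpen[setOpenTopology lam] {f : C(X, ℝ) | f '' B ⊆ U} :=
          isOpen_generateFrom_of_mem ⟨B, hB, U, hU, rfl⟩
        have h3 := @IsOpen.inter _ (setOpenTopology lam) _ _ h1 h2
        convert h3 using 1
        ext f
        simp [image_union]
      · exact isOpen_generateFrom_of_mem ⟨F, hF, U, hU, rfl⟩

/-- Open sets contain uniform balls. -/
lemma open_contains_ball {X : Type*} [TopologicalSpace X] {lam : Set (Set X)}
    (hlam : MemPsi lam) (hne : lam.Nonempty) (G : Set C(X, ℝ))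
    (hG : IsOpen[setOpenTopology lam] G) : ∀ h ∈ G, ∃ A ∈ lam, ∃ ε > 0,
      ∀ f : C(X, ℝ), (∀ x ∈ A, |f x - h x| < ε) → f ∈ G := by
  have hG' : GenerateOpen
    {S | ∃ F ∈ lam, ∃ U : Set ℝ, IsOpen U ∧ S = {f : C(X, ℝ) | f '' F ⊆ U}} G := hG
  induction hG' with
  | basic S hS =>
    obtain ⟨F, hF, U, hU, rfl⟩ := hS
    intro h hh
    obtain ⟨δ, hδ, hsub⟩ := (hlam.ccompact F hF h).exists_thickening_subset_open hU hh
    refine ⟨F, hF, δ, hδ, fun f hf => ?_⟩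
    rintro _ ⟨x, hx, rfl⟩
    apply hsub
    rw [Metric.mem_thickening_iff]
    exact ⟨h x, mem_image_of_mem _ hx, by rw [Real.dist_eq]; exact hf x hx⟩
  | univ =>
    intro h _
    obtain ⟨A, hA⟩ := hne
    exact ⟨A, hA, 1, one_pos, fun _ _ => mem_univ _⟩
  | inter S T hS hT ihS ihT =>
    rintro h ⟨h1, h2⟩
    obtain ⟨A, hA, ε, hε, HA⟩ := ihS hS h h1
    obtain ⟨B, hB, δ, hδ, HB⟩ := ihT hT h h2
    refine ⟨A ∪ B, lam_union hlam hA hB, min ε δ, lt_min hε hδ, fun f hf => ⟨?_, ?_⟩⟩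
    · exact HA f fun x hx => (hf x (Or.inl hx)).trans_le (min_le_left _ _)
    · exact HB f fun x hx => (hf x (Or.inr hx)).trans_le (min_le_right _ _)
  | sUnion S hS ih =>
    rintro h ⟨T, hT, hh⟩
    obtain ⟨A, hA, ε, hε, H⟩ := ih T hT (hS T hT) h hh
    exact ⟨A, hA, ε, hε, fun f hf => ⟨T, hT, H f hf⟩⟩

/-- Dense sets meet uniform balls. -/
lemma dense_meets_ball {X : Type*} [TopologicalSpace X] {lam : Set (Set X)}
    (hlam : MemPsi lam) (hcomp : ∀ A ∈ lam, IsCompact A) (D : Set C(X, ℝ))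
    (hD : @Dense _ (setOpenTopology lam) D) (h : C(X, ℝ)) (A : Set X) (hA : A ∈ lam)
    (ε : ℝ) (hε : 0 < ε) : ∃ d ∈ D, ∀ x ∈ A, |d x - h x| < ε := by
  obtain ⟨t, htA, htf, hcov⟩ := (hlam.ccompact A hA h).finite_cover_balls
    (show 0 < ε / 4 by positivity)
  let P : ℝ → Set X := fun c => A ∩ h ⁻¹' (Metric.closedBall c (ε / 4))
  have hP : ∀ c ∈ t, P c ∈ lam := by
    intro c hc
    have hcl : IsClosed (h ⁻¹' (Metric.closedBall c (ε / 4))) :=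
      Metric.isClosed_closedBall.preimage h.continuous
    refine hlam.hereditary A hA _ inter_subset_left ?_ ((hlam.closed A hA).inter hcl) ?_
    · obtain ⟨a, ha, rfl⟩ := htA hc
      exact ⟨a, ha, Metric.mem_closedBall_self (by positivity)⟩
    · intro f
      exact ((hcomp A hA).inter_right hcl).image f.continuous
  let G : Set C(X, ℝ) := ⋂ c ∈ t, {f : C(X, ℝ) | f '' (P c) ⊆ Metric.ball c (ε / 2)}
  have hG : IsOpen[setOpenTopology lam] G := by
    letI := setOpenTopology lam
    exact htf.isOpen_biInter fun c hc =>
      isOpen_generateFrom_of_mem ⟨P c, hP c hc, _, Metric.isOpen_ball, rfl⟩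
  have hhG : h ∈ G := by
    refine mem_iInter₂.2 fun c _ => ?_
    rintro _ ⟨x, hx, rfl⟩
    exact Metric.closedBall_subset_ball (by linarith) hx.2
  obtain ⟨d, hdG, hdD⟩ := (@Dense.inter_open_nonempty _ (setOpenTopology lam) _ hD) G hG ⟨h, hhG⟩
  refine ⟨d, hdD, fun x hx => ?_⟩
  obtain ⟨c, hc, hxc⟩ := mem_iUnion₂.1 (hcov (mem_image_of_mem h hx))
  have h1 : d x ∈ Metric.ball c (ε / 2) :=
    mem_iInter₂.1 hdG c hc (mem_image_of_mem d ⟨hx, Metric.ball_subset_closedBall hxc⟩)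
  rw [Metric.mem_ball, Real.dist_eq] at h1 hxc
  rw [abs_lt] at *
  constructor <;> linarith

lemma exists_hilbert_map {X : Type*} [TopologicalSpace X] {lam : Set (Set X)}
    (hsm : SeparablyLamSubmetrizable X lam) :
    ∃ φ : C(X, ℕ → unitInterval), Set.InjOn φ (⋃₀ lam) := by
  obtain ⟨Y, m, hsep, f, hf, -, hinj⟩ := hsm
  letI := m
  haveI := hsep
  rcases isEmpty_or_nonempty X with hX | ⟨⟨x₀⟩⟩
  · exact ⟨⟨fun x => (hX.elim x), continuous_of_const fun x => hX.elim x⟩, fun x => hX.elim x⟩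
  haveI : Nonempty Y := ⟨f x₀⟩
  let φ : C(X, ℕ → unitInterval) :=
    ⟨fun x n => Set.projIcc 0 1 zero_le_one (dist (f x) (denseSeq Y n)), by
      refine continuous_pi fun n => continuous_projIcc.comp (hf.dist continuous_const)⟩
  refine ⟨φ, fun a ha b hb hab => hinj ha hb ?_⟩
  by_contra hne
  have hd : 0 < dist (f a) (f b) := dist_pos.2 hne
  obtain ⟨n, hn⟩ := (denseRange_denseSeq Y).exists_dist_lt (f a)
    (show 0 < min (1 / 2) (dist (f a) (f b) / 2) by positivity)
  have e : (Set.projIcc (0 : ℝ) 1 zero_le_one (dist (f a) (denseSeq Y n)) : ℝ) =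
      Set.projIcc (0 : ℝ) 1 zero_le_one (dist (f b) (denseSeq Y n)) :=
    congrArg Subtype.val (congrFun hab n)
  simp only [Set.coe_projIcc] at e
  have h1 := hn.trans_le (min_le_left _ _)
  have h2 := hn.trans_le (min_le_right _ _)
  have h3 := dist_triangle_right (f a) (f b) (denseSeq Y n)
  rw [min_eq_right (by linarith), max_eq_right dist_nonneg] at e
  rcases min_choice 1 (dist (f b) (denseSeq Y n)) with h | h <;> rw [h] at e
  · rw [max_eq_right zero_le_one] at e; linarith
  · rw [max_eq_right dist_nonneg] at e; linarith

/-- A countable uniformly-on-`lam` dense sequence. -/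
lemma exists_dense_seq {X : Type*} [TopologicalSpace X] {lam : Set (Set X)}
    (hcomp : ∀ A ∈ lam, IsCompact A) (φ : C(X, ℕ → unitInterval))
    (hφ : Set.InjOn φ (⋃₀ lam)) :
    ∃ q : ℕ → C(X, ℝ), ∀ f : C(X, ℝ), ∀ A ∈ lam, ∀ ε > 0, ∃ k, ∀ x ∈ A, |q k x - f x| < ε := by
  refine ⟨fun k => (denseSeq C(ℕ → unitInterval, ℝ) k).comp φ, fun f A hA ε hε => ?_⟩
  haveI : CompactSpace A := isCompact_iff_compactSpace.1 (hcomp A hA)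
  have he : IsClosedEmbedding (fun x : A => φ x) := by
    refine Continuous.isClosedEmbedding (by fun_prop) fun a b hab => ?_
    exact Subtype.ext (hφ ⟨A, hA, a.2⟩ ⟨A, hA, b.2⟩ hab)
  obtain ⟨g, hg⟩ := ContinuousMap.exists_extension he (f.restrict A)
  obtain ⟨k, hk⟩ := (denseRange_denseSeq C(ℕ → unitInterval, ℝ)).exists_dist_lt g hε
  refine ⟨k, fun x hx => ?_⟩
  have h1 : g (φ x) = f x := congrArg (fun u : C(A, ℝ) => u ⟨x, hx⟩) hg
  rw [← h1, ← Real.dist_eq, dist_comm]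
  exact (ContinuousMap.dist_apply_le_dist (φ x)).trans_lt hk

lemma exists_bump {X : Type*} [TopologicalSpace X] {A U : Set X} (hA : IsCompact A)
    (hU : IsCozero U) (hAU : A ⊆ U) :
    ∃ e : C(X, ℝ), (∀ x ∈ A, e x = 1) ∧ ∀ x ∉ U, e x = 0 := by
  obtain ⟨g, rfl⟩ := hU
  rcases A.eq_empty_or_nonempty with rfl | hne
  · exact ⟨0, by simp, by simp⟩
  obtain ⟨a, ha, hmin⟩ := hA.exists_isMinOn hne (f := fun x => |g x|) (by fun_prop)
  have hpos : 0 < |g a| := abs_pos.2 (hAU ha)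
  refine ⟨⟨fun x => min (|g x| / |g a|) 1, by fun_prop⟩, fun x hx => ?_, fun x hx => ?_⟩
  · have : |g a| ≤ |g x| := hmin hx
    exact min_eq_right ((one_le_div hpos).2 this)
  · have : g x = 0 := by simpa using hx
    simp [this]

lemma forward {X : Type*} [TopologicalSpace X] {lam : Set (Set X)} (hlam : MemPsi lam)
    (hcomp : ∀ A ∈ lam, IsCompact A)
    (H : HSepBi (setOpenTopology lam) (setOpenTopology lam))
    (𝒰 : ℕ → Set (Set X)) (h𝒰 : ∀ n, IsFCover lam (𝒰 n)) :
    ∃ 𝒱 : ℕ → Set (Set X), (∀ n, (𝒱 n).Finite ∧ 𝒱 n ⊆ 𝒰 n) ∧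
      ∀ F ∈ lam, ∀ᶠ n in Filter.atTop, ∃ V ∈ 𝒱 n, F ⊆ V := by
  rcases lam.eq_empty_or_nonempty with hl | hne
  · exact ⟨fun _ => ∅, by simp, by simp [hl]⟩
  let D : ℕ → Set C(X, ℝ) := fun n => {f | ∃ U ∈ 𝒰 n, ∀ x ∉ U, f x = 1}
  have hD : ∀ n, @Dense _ (setOpenTopology lam) (D n) := by
    intro n
    letI := setOpenTopology lam
    rw [dense_iff_inter_open]
    rintro G hG ⟨h, hh⟩
    obtain ⟨A, hA, ε, hε, hball⟩ := open_contains_ball hlam hne G hG h hh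
    obtain ⟨U, hU, hAU⟩ := (h𝒰 n).2.2 A hA
    obtain ⟨e, he1, he0⟩ := exists_bump (hcomp A hA) ((h𝒰 n).2.1 U hU) hAU
    refine ⟨⟨fun x => e x * h x + (1 - e x), by fun_prop⟩, hball _ fun x hx => ?_, U, hU,
      fun x hx => ?_⟩
    · simp [he1 x hx, hε]
    · simp [he0 x hx]
  obtain ⟨F, hF, hFG⟩ := H D hD
  choose! u hu hu1 using fun n (f : C(X, ℝ)) (hf : f ∈ D n) => hf
  refine ⟨fun n => u n '' F n, fun n => ⟨(hF n).1.image _, ?_⟩, fun A hA => ?_⟩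
  · rintro _ ⟨f, hf, rfl⟩
    exact hu n f ((hF n).2 hf)
  · have ho : IsOpen[setOpenTopology lam] {f : C(X, ℝ) | f '' A ⊆ Set.Iio 1} :=
      isOpen_generateFrom_of_mem ⟨A, hA, _, isOpen_Iio, rfl⟩
    have hn0 : ({f : C(X, ℝ) | f '' A ⊆ Set.Iio 1}).Nonempty := by
      refine ⟨0, ?_⟩
      rintro _ ⟨x, -, rfl⟩
      simp
    filter_upwards [hFG _ ho hn0] with n hn
    obtain ⟨f, hf1, hf2⟩ := hn
    refine ⟨u n f, mem_image_of_mem _ hf2, fun x hx => ?_⟩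
    by_contra hxu
    have h1 := hu1 n f ((hF n).2 hf2) x hxu
    have h2 : f x < 1 := hf1 (mem_image_of_mem f hx)
    linarith

lemma single_approx {X : Type*} [TopologicalSpace X] {lam : Set (Set X)} (hlam : MemPsi lam)
    (hcomp : ∀ A ∈ lam, IsCompact A)
    (H : ∀ 𝒰 : ℕ → Set (Set X), (∀ n, IsFCover lam (𝒰 n)) →
        ∃ 𝒱 : ℕ → Set (Set X), (∀ n, (𝒱 n).Finite ∧ 𝒱 n ⊆ 𝒰 n) ∧
          ∀ F ∈ lam, ∀ᶠ n in Filter.atTop, ∃ V ∈ 𝒱 n, F ⊆ V)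
    (D : ℕ → Set C(X, ℝ)) (hD : ∀ n, @Dense _ (setOpenTopology lam) (D n)) (h : C(X, ℝ)) :
    ∃ F : ℕ → Set C(X, ℝ), (∀ n, (F n).Finite ∧ F n ⊆ D n) ∧
      ∀ A ∈ lam, ∀ᶠ n in Filter.atTop, ∃ f ∈ F n, ∀ x ∈ A, |f x - h x| < 1 / ((n : ℝ) + 1) := by
  classical
  let W : ℕ → C(X, ℝ) → Set X := fun n f => {x | |f x - h x| < 1 / ((n : ℝ) + 1)}
  have hW : ∀ n, Set.univ ∉ W n '' D n → IsFCover lam (W n '' D n) := by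
    intro n hn
    refine ⟨hn, ?_, fun A hA => ?_⟩
    · rintro _ ⟨f, -, rfl⟩
      refine ⟨⟨fun x => max (1 / ((n : ℝ) + 1) - |f x - h x|) 0, by fun_prop⟩, ?_⟩
      ext x
      simp only [W, mem_setOf_eq, ContinuousMap.coe_mk, ne_eq, max_eq_right_iff, not_le, sub_pos]
    · obtain ⟨d, hd, hdA⟩ := dense_meets_ball hlam hcomp (D n) (hD n) h A hA (1 / ((n : ℝ) + 1))
        (by positivity)
      exact ⟨W n d, mem_image_of_mem _ hd, hdA⟩
  obtain ⟨𝒱, h𝒱, h𝒱c⟩ : ∃ 𝒱 : ℕ → Set (Set X),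
      (∀ n, Set.univ ∉ W n '' D n → (𝒱 n).Finite ∧ 𝒱 n ⊆ W n '' D n) ∧
        ∀ F ∈ lam, ∀ᶠ n in Filter.atTop, Set.univ ∉ W n '' D n → ∃ V ∈ 𝒱 n, F ⊆ V := by
    by_cases hex : ∃ 𝒲, IsFCover lam 𝒲
    · obtain ⟨𝒲, h𝒲⟩ := hex
      obtain ⟨𝒱, h1, h2⟩ := H (fun n => if Set.univ ∉ W n '' D n then W n '' D n else 𝒲) (by
        intro n
        split_ifs with hn
        · exact h𝒲
        · exact hW n hn)
      refine ⟨𝒱, fun n hn => ?_, fun F hF => (h2 F hF).mono fun n hn _ => hn⟩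
      have := h1 n
      simp only [if_pos hn] at this
      exact this
    · have : ∀ n, Set.univ ∈ W n '' D n := fun n => by
        by_contra hn
        exact hex ⟨_, hW n hn⟩
      exact ⟨fun _ => ∅, fun n hn => absurd (this n) hn,
        fun F _ => Eventually.of_forall fun n hn => absurd (this n) hn⟩
  have step : ∀ n, ∃ F : Set C(X, ℝ), (F.Finite ∧ F ⊆ D n) ∧
      ((Set.univ ∈ W n '' D n ∧ Set.univ ∈ W n '' F) ∨
        (Set.univ ∉ W n '' D n ∧ 𝒱 n = W n '' F)) := by
    intro n
    by_cases hn : Set.univ ∈ W n '' D n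
    · obtain ⟨d, hd, hdu⟩ := hn
      exact ⟨{d}, ⟨finite_singleton d, by simpa using hd⟩,
        Or.inl ⟨⟨d, hd, hdu⟩, ⟨d, rfl, hdu⟩⟩⟩
    · obtain ⟨F, hFD, hFf, hFe⟩ := (Set.exists_subset_image_finite_and (f := W n) (s := D n)
        (p := fun t => t = 𝒱 n)).1 ⟨𝒱 n, (h𝒱 n hn).2, (h𝒱 n hn).1, rfl⟩
      exact ⟨F, ⟨hFf, hFD⟩, Or.inr ⟨hn, hFe.symm⟩⟩
  choose F hF hF2 using step
  refine ⟨F, hF, fun A hA => ?_⟩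
  filter_upwards [h𝒱c A hA] with n hn
  rcases hF2 n with ⟨-, f, hf, hfu⟩ | ⟨hnu, hV⟩
  · refine ⟨f, hf, fun x _ => ?_⟩
    have : x ∈ W n f := hfu ▸ mem_univ x
    exact this
  · obtain ⟨V, hVm, hAV⟩ := hn hnu
    rw [hV] at hVm
    obtain ⟨f, hf, rfl⟩ := hVm
    exact ⟨f, hf, fun x hx => hAV hx⟩

lemma backward {X : Type*} [TopologicalSpace X] {lam : Set (Set X)} (hlam : MemPsi lam)
    (hcomp : ∀ A ∈ lam, IsCompact A)
    (q : ℕ → C(X, ℝ))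
    (hq : ∀ f : C(X, ℝ), ∀ A ∈ lam, ∀ ε > 0, ∃ k, ∀ x ∈ A, |q k x - f x| < ε)
    (H : ∀ 𝒰 : ℕ → Set (Set X), (∀ n, IsFCover lam (𝒰 n)) →
        ∃ 𝒱 : ℕ → Set (Set X), (∀ n, (𝒱 n).Finite ∧ 𝒱 n ⊆ 𝒰 n) ∧
          ∀ F ∈ lam, ∀ᶠ n in Filter.atTop, ∃ V ∈ 𝒱 n, F ⊆ V) :
    HSepBi (setOpenTopology lam) (setOpenTopology lam) := by
  intro D hD
  rcases lam.eq_empty_or_nonempty with hl | hne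
  · have hX : IsEmpty X := by
      by_contra hX
      rw [not_isEmpty_iff] at hX
      obtain ⟨A, hA, -⟩ := hlam.piNetwork Set.univ isOpen_univ univ_nonempty
      simp [hl] at hA
    haveI : Subsingleton C(X, ℝ) := ⟨fun f g => by ext x; exact hX.elim x⟩
    refine ⟨D, fun n => ⟨Set.toFinite _, subset_rfl⟩, fun G hG hGn => Eventually.of_forall fun n => ?_⟩
    exact (@Dense.inter_open_nonempty _ (setOpenTopology lam) _ (hD n)) G hG hGn
  choose F hF hFA using fun k => single_approx hlam hcomp H D hD (q k)
  refine ⟨fun n => ⋃ k ∈ Set.Iic n, F k n, fun n => ⟨?_, ?_⟩, ?_⟩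
  · exact (Set.finite_Iic n).biUnion fun k _ => (hF k n).1
  · exact iUnion₂_subset fun k _ => (hF k n).2
  · rintro G hG ⟨h, hh⟩
    obtain ⟨A, hA, ε, hε, hball⟩ := open_contains_ball hlam hne G hG h hh
    obtain ⟨k, hk⟩ := hq h A hA (ε / 2) (by positivity)
    obtain ⟨N, hN⟩ := exists_nat_one_div_lt (show 0 < ε / 2 by positivity)
    filter_upwards [hFA k A hA, eventually_ge_atTop k, eventually_ge_atTop N] with n hn hkn hNn
    obtain ⟨f, hf, hfA⟩ := hn
    refine ⟨f, hball f fun x hx => ?_, mem_iUnion₂.2 ⟨k, hkn, hf⟩⟩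
    have h1 := hfA x hx
    have h2 := hk x hx
    have h3 : 1 / ((n : ℝ) + 1) ≤ 1 / ((N : ℝ) + 1) := by
      apply one_div_le_one_div_of_le (by positivity)
      have : (N : ℝ) ≤ n := by exact_mod_cast hNn
      linarith
    have h4 := abs_sub_le (f x) (q k x) (h x)
    linarith

end Helpers

/-- For a Tychonoff separably `λ`-submetrizable space `X` and `λ ∈ Ψ`:
`C_λ(X)` is H-separable iff for each sequence of `λ`-f-covers of `X` there are finite
subfamilies such that each `F ∈ λ` is contained in an element of `𝒱_n` for all but finitely
many `n`. -/
theorem hSep_iff_fCover_grouping_single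
    {X : Type*} [TopologicalSpace X] [T35Space X]
    (lam : Set (Set X)) (hlam : MemPsi lam)
    (hsm : SeparablyLamSubmetrizable X lam) :
    HSepBi (setOpenTopology lam) (setOpenTopology lam) ↔
      (∀ 𝒰 : ℕ → Set (Set X), (∀ n, IsFCover lam (𝒰 n)) →
        ∃ 𝒱 : ℕ → Set (Set X), (∀ n, (𝒱 n).Finite ∧ 𝒱 n ⊆ 𝒰 n) ∧
          ∀ F ∈ lam, ∀ᶠ n in Filter.atTop, ∃ V ∈ 𝒱 n, F ⊆ V) := by
  obtain ⟨φ, hφ⟩ := exists_hilbert_map hsm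
  have hcomp : ∀ A ∈ lam, IsCompact A := by
    intro A hA
    letI := TopologicalSpace.metrizableSpaceMetric (ℕ → unitInterval)
    exact ccompact_isCompact φ A (hlam.ccompact A hA)
      (hφ.mono (subset_sUnion_of_mem hA))
  obtain ⟨q, hq⟩ := exists_dense_seq hcomp φ hφ
  exact ⟨fun H 𝒰 h𝒰 => forward hlam hcomp H 𝒰 h𝒰, fun H => backward hlam hcomp q hq H⟩
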